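/- arXiv:2212.05754 — 7 statements merged into one kernel-verified Lean document; each statement's English description precedes it below -/
import Mathlib

section
/- If χ : ℤ^{2g} → ℂ is a nonzero additive group homomorphism (g ≥ 1), then there exists a symplectic basis α₁, β₁, …, α_g, β_g of ℤ^{2g} such that χ(αᵢ) ≠ 0 and χ(βᵢ) ≠ 0 for every i = 1, …, g. -/
open scoped BigOperators

/-- The standard symplectic (intersection) form on `ℤ^{2g}`, modelling the
intersection pairing on `H₁(S_g; ℤ)`. -/
def symplecticForm (g : ℕ) (x y : Fin (2 * g) → ℤ) : ℤ :=
  ∑ i : Fin g,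
    (x ⟨2 * i.1, by have := i.isLt; omega⟩ * y ⟨2 * i.1 + 1, by have := i.isLt; omega⟩
      - x ⟨2 * i.1 + 1, by have := i.isLt; omega⟩ * y ⟨2 * i.1, by have := i.isLt; omega⟩)

/-- `α₁, β₁, …, α_g, β_g` is a symplectic basis of `ℤ^{2g}`:
`ω(αᵢ, αⱼ) = 0`, `ω(βᵢ, βⱼ) = 0` and `ω(αᵢ, βⱼ) = δᵢⱼ`. -/
def IsSymplecticBasis (g : ℕ) (α β : Fin g → (Fin (2 * g) → ℤ)) : Prop :=
  ∀ i j : Fin g,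
    symplecticForm g (α i) (α j) = 0 ∧ symplecticForm g (β i) (β j) = 0 ∧
      symplecticForm g (α i) (β j) = (if i = j then 1 else 0)


lemma sf_add_left (g : ℕ) (x y z : Fin (2 * g) → ℤ) :
    symplecticForm g (x + y) z = symplecticForm g x z + symplecticForm g y z := by
  simp only [symplecticForm, ← Finset.sum_add_distrib, Pi.add_apply]
  exact Finset.sum_congr rfl fun i _ => by ring

lemma sf_skew (g : ℕ) (x y : Fin (2 * g) → ℤ) :
    symplecticForm g x y = - symplecticForm g y x := by
  simp only [symplecticForm, ← Finset.sum_neg_distrib]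
  exact Finset.sum_congr rfl fun i _ => by ring

lemma sf_add_right (g : ℕ) (x y z : Fin (2 * g) → ℤ) :
    symplecticForm g x (y + z) = symplecticForm g x y + symplecticForm g x z := by
  rw [sf_skew, sf_add_left, sf_skew g x y, sf_skew g x z]; ring

lemma sf_sub_left (g : ℕ) (x y z : Fin (2 * g) → ℤ) :
    symplecticForm g (x - y) z = symplecticForm g x z - symplecticForm g y z := by
  have := sf_add_left g (x - y) y z
  rw [sub_add_cancel] at this; omega

lemma sf_sub_right (g : ℕ) (x y z : Fin (2 * g) → ℤ) :
    symplecticForm g x (y - z) = symplecticForm g x y - symplecticForm g x z := by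
  rw [sf_skew, sf_sub_left, sf_skew g x y, sf_skew g x z]; ring

/-- All handles in `S` have nonzero periods in some symplectic basis. -/
def GoodOn (g : ℕ) (χ : (Fin (2 * g) → ℤ) →+ ℂ) (S : Finset (Fin g))
    (α β : Fin g → (Fin (2 * g) → ℤ)) : Prop :=
  IsSymplecticBasis g α β ∧ ∀ i ∈ S, χ (α i) ≠ 0 ∧ χ (β i) ≠ 0

lemma move_beta (g : ℕ) (α β : Fin g → (Fin (2 * g) → ℤ)) (h : IsSymplecticBasis g α β)
    (j : Fin g) : IsSymplecticBasis g α (Function.update β j (β j + α j)) := by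
  intro p q
  have hs := fun p q => sf_skew g (β p) (α q)
  have h1 := fun p q => (h p q).1
  have h2 := fun p q => (h p q).2.1
  have h3 := fun p q => (h p q).2.2
  simp only [Function.update_apply]
  split_ifs <;> simp only [sf_add_left, sf_add_right, hs, h1, h2, h3] <;> grind

lemma move_alpha (g : ℕ) (α β : Fin g → (Fin (2 * g) → ℤ)) (h : IsSymplecticBasis g α β)
    (j : Fin g) : IsSymplecticBasis g (Function.update α j (α j + β j)) β := by
  intro p q
  have hs := fun p q => sf_skew g (β p) (α q)
  have h1 := fun p q => (h p q).1
  have h2 := fun p q => (h p q).2.1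
  have h3 := fun p q => (h p q).2.2
  simp only [Function.update_apply]
  split_ifs <;> simp only [sf_add_left, sf_add_right, hs, h1, h2, h3] <;> grind

lemma move_two (g : ℕ) (α β : Fin g → (Fin (2 * g) → ℤ)) (h : IsSymplecticBasis g α β)
    (i j : Fin g) (hij : i ≠ j) : IsSymplecticBasis g (Function.update α j (α j + α i))
      (Function.update β i (β i - β j)) := by
  intro p q
  have hs := fun p q => sf_skew g (β p) (α q)
  have h1 := fun p q => (h p q).1
  have h2 := fun p q => (h p q).2.1
  have h3 := fun p q => (h p q).2.2
  simp only [Function.update_apply]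
  split_ifs <;> simp only [sf_add_left, sf_add_right, sf_sub_left, sf_sub_right, hs, h1, h2, h3]
    <;> grind

lemma good_insert (g : ℕ) (χ : (Fin (2 * g) → ℤ) →+ ℂ) (S : Finset (Fin g))
    (α β : Fin g → (Fin (2 * g) → ℤ)) (h : GoodOn g χ S α β) (j : Fin g)
    (hj : χ (α j) ≠ 0 ∨ χ (β j) ≠ 0) :
    ∃ α' β', GoodOn g χ (insert j S) α' β' := by
  by_cases ha : χ (α j) = 0
  · refine ⟨_, _, move_alpha g α β h.1 j, fun i hi => ?_⟩
    by_cases hij : i = j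
    · subst hij
      simp_all
    · have := h.2 i (by simpa [hij] using hi)
      simpa [Function.update_apply, hij] using this
  by_cases hb : χ (β j) = 0
  · refine ⟨_, _, move_beta g α β h.1 j, fun i hi => ?_⟩
    by_cases hij : i = j
    · subst hij
      simp_all
    · have := h.2 i (by simpa [hij] using hi)
      simpa [Function.update_apply, hij] using this
  · refine ⟨α, β, h.1, fun i hi => ?_⟩
    by_cases hij : i = j
    · subst hij
      exact ⟨ha, hb⟩
    · exact h.2 i (by simpa [hij] using hi)

lemma good_step (g : ℕ) (χ : (Fin (2 * g) → ℤ) →+ ℂ) (S : Finset (Fin g))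
    (α β : Fin g → (Fin (2 * g) → ℤ)) (h : GoodOn g χ S α β) (k : Fin g) (hk : k ∈ S)
    (j : Fin g) : ∃ α' β', GoodOn g χ (insert j S) α' β' := by
  by_cases hj : χ (α j) ≠ 0 ∨ χ (β j) ≠ 0
  · exact good_insert g χ S α β h j hj
  push Not at hj
  have hkj : k ≠ j := by
    rintro rfl
    exact (h.2 k hk).1 hj.1
  refine good_insert g χ S _ _ ⟨move_two g α β h.1 k j hkj, fun i hi => ?_⟩ j (Or.inl ?_)
  · have hij : i ≠ j := by
      rintro rfl
      exact (h.2 i hi).1 hj.1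
    have := h.2 i hi
    by_cases hik : i = k
    · subst hik
      simpa [Function.update_apply, hij, hj.2] using this
    · simpa [Function.update_apply, hij, hik] using this
  · simpa [hj.1] using (h.2 k hk).1

lemma std_basis (g : ℕ) : IsSymplecticBasis g
    (fun i => Pi.single ⟨2 * i.1, by have := i.isLt; omega⟩ 1)
    (fun i => Pi.single ⟨2 * i.1 + 1, by have := i.isLt; omega⟩ 1) := by
  intro p q
  have e1 : ∀ a b : ℕ, 2 * a + 1 ≠ 2 * b := by intros; omega
  have e2 : ∀ a b : ℕ, 2 * a ≠ 2 * b + 1 := by intros; omega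
  simp [symplecticForm, Pi.single_apply, e1, e2, Fin.val_inj, eq_comm]

theorem nonzero_periods_on_some_symplectic_basis (g : ℕ) (hg : 1 ≤ g)
    (χ : (Fin (2 * g) → ℤ) →+ ℂ) (hχ : χ ≠ 0) :
    ∃ α β : Fin g → (Fin (2 * g) → ℤ), IsSymplecticBasis g α β ∧
      ∀ i : Fin g, χ (α i) ≠ 0 ∧ χ (β i) ≠ 0 := by
  obtain ⟨m, hm⟩ : ∃ m : Fin (2 * g), χ (Pi.single m 1) ≠ 0 := by
    by_contra! hc
    apply hχ
    ext m
    simpa using hc m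
  have hmlt := m.isLt
  obtain ⟨k, α₀, β₀, h₀⟩ : ∃ (k : Fin g) (α β : _), GoodOn g χ {k} α β := by
    refine ⟨⟨m.1 / 2, by omega⟩, good_insert g χ ∅ _ _ ⟨std_basis g, by simp⟩ _ ?_⟩
    rcases Nat.mod_two_eq_zero_or_one m.1 with h | h
    · left
      convert hm using 4
      simp only
      omega
    · right
      convert hm using 4
      simp only
      omega
  have key : ∀ T : Finset (Fin g), ∃ α β, GoodOn g χ (insert k T) α β := by
    intro T
    induction T using Finset.induction_on with
    | empty => exact ⟨α₀, β₀, h₀⟩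
    | insert j T _ ih =>
      obtain ⟨α, β, h⟩ := ih
      rw [Finset.insert_comm]
      exact good_step g χ _ α β h k (by simp) j
  obtain ⟨α, β, h⟩ := key Finset.univ
  exact ⟨α, β, h.1, fun i => h.2 i (by simp)⟩
end

section
/- If χ : M → ℂ is an additive homomorphism of non-trivial-ends type, then there exists a system of handle generators α₁, β₁, …, α_g, β_g in M such that χ(αⱼ) ≠ 0 or χ(βⱼ) ≠ 0 for at least one index j ∈ {1, …, g} (i.e., the genus part of χ induced by this system is nontrivial). -/
open scoped BigOperators

/-- `H₁(S_{g,n}; ℤ)` modelled as `ℤ^{2g} ⊕ ℤ^{n-1}`, the second factor being the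
peripheral subgroup. -/
abbrev HomologyPunctured (g n : ℕ) := (Fin (2 * g) → ℤ) × (Fin (n - 1) → ℤ)

/-- `α₁, β₁, …, α_g, β_g` is a system of handle generators of `ℤ^{2g} ⊕ ℤ^{n-1}`, with
respect to the intersection form given by the standard symplectic form on `ℤ^{2g}`
extended by zero on the peripheral factor. -/
def IsHandleSystem (g n : ℕ) (α β : Fin g → HomologyPunctured g n) : Prop :=
  ∀ i j : Fin g,
    symplecticForm g (α i).1 (α j).1 = 0 ∧ symplecticForm g (β i).1 (β j).1 = 0 ∧
      symplecticForm g (α i).1 (β j).1 = (if i = j then 1 else 0)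

/-- If `χ : M → ℂ` is an additive homomorphism of non-trivial-ends type (its restriction to
the peripheral subgroup `ℤ^{n-1}` is nonzero), then there exists a system of handle generators
`α₁, β₁, …, α_g, β_g` in `M` such that `χ(αⱼ) ≠ 0` or `χ(βⱼ) ≠ 0` for at least one index `j`. -/
theorem handle_system_with_nontrivial_genus_part (g n : ℕ) (hg : 1 ≤ g) (hn : 2 ≤ n)
    (χ : HomologyPunctured g n →+ ℂ)
    (hends : ∃ v : Fin (n - 1) → ℤ, χ (0, v) ≠ 0) :
    ∃ α β : Fin g → HomologyPunctured g n, IsHandleSystem g n α β ∧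
      ∃ j : Fin g, χ (α j) ≠ 0 ∨ χ (β j) ≠ 0 := by
  obtain ⟨v, hv⟩ := hends
  have key : ∀ w : Fin (n - 1) → ℤ, IsHandleSystem g n
      (fun i => ((fun k => if k.1 = 2 * i.1 then 1 else 0), w))
      (fun i => ((fun k => if k.1 = 2 * i.1 + 1 then 1 else 0), 0)) := by
    intro w i j
    have h1 : ∀ a b : ℕ, 2 * a + 1 ≠ 2 * b := by intros; omega
    have h2 : ∀ a b : ℕ, 2 * a ≠ 2 * b + 1 := by intros; omega
    refine ⟨?_, ?_, ?_⟩
    · simp [symplecticForm, h1]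
    · simp [symplecticForm, h2]
    · simp only [symplecticForm, h1, h2, if_false, zero_mul, sub_zero]
      rw [Finset.sum_eq_single i]
      · simp [Fin.ext_iff]
      · intro b _ hb
        have : b.1 ≠ i.1 := fun h => hb (Fin.ext h)
        simp [this]
      · simp
  let j : Fin g := ⟨0, hg⟩
  let e : Fin (2 * g) → ℤ := fun k => if k.1 = 2 * j.1 then 1 else 0
  by_cases h : χ (e, 0) = 0
  · refine ⟨_, _, key v, j, Or.inl ?_⟩
    change χ (e, v) ≠ 0
    have : ((e, v) : HomologyPunctured g n) = (e, 0) + (0, v) := by simp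
    rw [this, map_add, h, zero_add]
    exact hv
  · exact ⟨_, _, key 0, j, Or.inl h⟩
end

section
/- If χ : M → ℂ is an additive homomorphism of non-trivial-ends type which is not real-collinear, then there exists a system of handle generators α₁, β₁, …, α_g, β_g in M whose volume is positive, i.e. Σᵢ₌₁^g Im(conj(χ(αᵢ)) · χ(βᵢ)) > 0. -/
open scoped BigOperators

/-- `χ` is real-collinear: its image is contained in `ℝ·c` for some `c ∈ ℂ`. -/
def RealCollinear {M : Type*} [AddCommGroup M] (χ : M →+ ℂ) : Prop :=
  ∃ c : ℂ, ∀ x : M, ∃ r : ℝ, χ x = (r : ℂ) * c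


/-- The standard handle generators, shifted by peripheral elements. -/
def stdA (g n : ℕ) (p : Fin g → Fin (n - 1) → ℤ) (i : Fin g) : HomologyPunctured g n :=
  (Pi.single ⟨2 * i.1, by have := i.isLt; omega⟩ 1, p i)

/-- The standard handle generators, shifted by peripheral elements. -/
def stdB (g n : ℕ) (p : Fin g → Fin (n - 1) → ℤ) (i : Fin g) : HomologyPunctured g n :=
  (Pi.single ⟨2 * i.1 + 1, by have := i.isLt; omega⟩ 1, p i)

lemma std_isHandle (g n : ℕ) (p q : Fin g → Fin (n - 1) → ℤ) :
    IsHandleSystem g n (stdA g n p) (stdB g n q) := by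
  have h1 : ∀ a b : ℕ, 2 * a + 1 ≠ 2 * b := by intros; omega
  have h2 : ∀ a b : ℕ, 2 * a ≠ 2 * b + 1 := by intros; omega
  intro i j
  refine ⟨?_, ?_, ?_⟩
  · simp [symplecticForm, stdA, Pi.single_apply, h1]
  · simp [symplecticForm, stdB, Pi.single_apply, h2]
  · simp [symplecticForm, stdA, stdB, Pi.single_apply, h1, h2, ← Fin.ext_iff, eq_comm]

lemma zero_of_bdd (T c : ℝ) (h : ∀ k : ℤ, T + k * c ≤ 0) : c = 0 := by
  by_contra hc
  obtain ⟨m, hm⟩ := exists_nat_gt (-T / |c|)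
  have hpos : 0 < |c| := abs_pos.mpr hc
  rw [div_lt_iff₀ hpos] at hm
  rcases abs_cases c with ⟨h1, _⟩ | ⟨h1, _⟩
  · have := h m
    rw [h1] at hm
    push_cast at this
    linarith
  · have := h (-m)
    rw [h1] at hm
    push_cast at this
    linarith

lemma shiftA (g n : ℕ) (χ : HomologyPunctured g n →+ ℂ) (p : Fin g → Fin (n - 1) → ℤ)
    (i j : Fin g) (k : ℤ) (v : Fin (n - 1) → ℤ) :
    χ (stdA g n (p + Pi.single i (k • v)) j) =
      χ (stdA g n p j) + if j = i then (k : ℂ) * χ (0, v) else 0 := by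
  have h : stdA g n (p + Pi.single i (k • v)) j =
      stdA g n p j + if j = i then k • ((0, v) : HomologyPunctured g n) else 0 := by
    by_cases hj : j = i
    · subst hj; simp [stdA]
    · simp [stdA, hj]
  rw [h, map_add]
  split_ifs
  · rw [map_zsmul, zsmul_eq_mul]
  · rw [map_zero]

lemma shiftB (g n : ℕ) (χ : HomologyPunctured g n →+ ℂ) (p : Fin g → Fin (n - 1) → ℤ)
    (i j : Fin g) (k : ℤ) (v : Fin (n - 1) → ℤ) :
    χ (stdB g n (p + Pi.single i (k • v)) j) =
      χ (stdB g n p j) + if j = i then (k : ℂ) * χ (0, v) else 0 := by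
  have h : stdB g n (p + Pi.single i (k • v)) j =
      stdB g n p j + if j = i then k • ((0, v) : HomologyPunctured g n) else 0 := by
    by_cases hj : j = i
    · subst hj; simp [stdB]
    · simp [stdB, hj]
  rw [h, map_add]
  split_ifs
  · rw [map_zsmul, zsmul_eq_mul]
  · rw [map_zero]

/-- If `χ : M → ℂ` is an additive homomorphism of non-trivial-ends type which is not
real-collinear, then there exists a system of handle generators `α₁, β₁, …, α_g, β_g` in `M`
whose volume is positive, i.e. `Σᵢ Im(conj(χ(αᵢ)) · χ(βᵢ)) > 0`. -/
theorem handle_system_with_positive_volume (g n : ℕ) (hg : 1 ≤ g) (hn : 2 ≤ n)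
    (χ : HomologyPunctured g n →+ ℂ)
    (hends : ∃ v : Fin (n - 1) → ℤ, χ (0, v) ≠ 0)
    (hcol : ¬ RealCollinear χ) :
    ∃ α β : Fin g → HomologyPunctured g n, IsHandleSystem g n α β ∧
      0 < ∑ i : Fin g, ((starRingEnd ℂ) (χ (α i)) * χ (β i)).im := by
  by_contra hno
  push Not at hno
  have hT : ∀ p q, ∑ i : Fin g, ((starRingEnd ℂ) (χ (stdA g n p i)) * χ (stdB g n q i)).im ≤ 0 :=
    fun p q => hno _ _ (std_isHandle g n p q)
  obtain ⟨v, hv⟩ := hends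
  have hB : ∀ q i, ((starRingEnd ℂ) (χ (0, v)) * χ (stdB g n q i)).im = 0 := by
    intro q i
    apply zero_of_bdd
      (∑ j : Fin g, ((starRingEnd ℂ) (χ (stdA g n 0 j)) * χ (stdB g n q j)).im)
    intro k
    refine le_trans (le_of_eq ?_) (hT (0 + Pi.single i (k • v)) q)
    have : ∀ j, ((starRingEnd ℂ) (χ (stdA g n (0 + Pi.single i (k • v)) j)) *
        χ (stdB g n q j)).im = ((starRingEnd ℂ) (χ (stdA g n 0 j)) * χ (stdB g n q j)).im +
        if j = i then k * ((starRingEnd ℂ) (χ (0, v)) * χ (stdB g n q j)).im else 0 := by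
      intro j
      rw [shiftA]
      split_ifs
      · simp; ring
      · simp
    rw [Finset.sum_congr rfl (fun j _ => this j), Finset.sum_add_distrib]
    simp
  have hA : ∀ p i, ((starRingEnd ℂ) (χ (0, v)) * χ (stdA g n p i)).im = 0 := by
    intro p i
    rw [← neg_eq_zero]
    apply zero_of_bdd
      (∑ j : Fin g, ((starRingEnd ℂ) (χ (stdA g n p j)) * χ (stdB g n 0 j)).im)
    intro k
    refine le_trans (le_of_eq ?_) (hT p (0 + Pi.single i (k • v)))
    have : ∀ j, ((starRingEnd ℂ) (χ (stdA g n p j)) *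
        χ (stdB g n (0 + Pi.single i (k • v)) j)).im =
        ((starRingEnd ℂ) (χ (stdA g n p j)) * χ (stdB g n 0 j)).im +
        if j = i then k * -((starRingEnd ℂ) (χ (0, v)) * χ (stdA g n p j)).im else 0 := by
      intro j
      rw [shiftB]
      split_ifs
      · simp; ring
      · simp
    rw [Finset.sum_congr rfl (fun j _ => this j), Finset.sum_add_distrib]
    simp
  let f : HomologyPunctured g n →+ ℝ :=
    Complex.imAddGroupHom.comp ((AddMonoidHom.mulLeft ((starRingEnd ℂ) (χ (0, v)))).comp χ)
  have hf : ∀ x, f x = ((starRingEnd ℂ) (χ (0, v)) * χ x).im := fun x => rfl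
  have hper : ∀ u, f (0, u) = 0 := by
    intro u
    have e : ((0, u) : HomologyPunctured g n) =
        stdA g n (fun _ => u) ⟨0, hg⟩ - stdA g n 0 ⟨0, hg⟩ := by simp [stdA]
    rw [e, map_sub, hf, hf, hA, hA, sub_zero]
  have hfirst : f.comp (AddMonoidHom.inl _ _) = 0 := by
    apply AddMonoidHom.functions_ext
    intro j x
    have key : f (Pi.single j 1, 0) = 0 := by
      rcases Nat.even_or_odd' j.1 with ⟨m, hm | hm⟩
      · have := hA 0 ⟨m, by omega⟩
        rw [← hf] at this
        convert this using 2
        simp [stdA, ← hm]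
      · have := hB 0 ⟨m, by omega⟩
        rw [← hf] at this
        convert this using 2
        simp [stdB, ← hm]
    have e : ((Pi.single j x, 0) : HomologyPunctured g n) = x • (Pi.single j 1, 0) := by
      ext l <;> simp [Pi.single_apply]
    simp only [AddMonoidHom.comp_apply, AddMonoidHom.inl_apply, AddMonoidHom.zero_apply]
    rw [e, map_zsmul, key, smul_zero]
  have hall : ∀ x, f x = 0 := by
    rintro ⟨a, b⟩
    have e : ((a, b) : HomologyPunctured g n) = (a, 0) + (0, b) := by simp
    rw [e, map_add, hper, add_zero]
    exact DFunLike.congr_fun hfirst a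
  apply hcol
  refine ⟨χ (0, v), fun x => ⟨((starRingEnd ℂ) (χ (0, v)) * χ x).re / Complex.normSq (χ (0, v)), ?_⟩⟩
  have h0 := hall x
  rw [hf] at h0
  have h1 : (starRingEnd ℂ) (χ (0, v)) * χ x =
      ((((starRingEnd ℂ) (χ (0, v)) * χ x).re : ℝ) : ℂ) := by
    apply Complex.ext <;> simp only [Complex.ofReal_re, Complex.ofReal_im, h0]
  push_cast
  rw [← h1, Complex.normSq_eq_conj_mul_self]
  have h2 : (starRingEnd ℂ) (χ (0, v)) ≠ 0 := by simpa using hv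
  field_simp
end

section
/- Let χ : M → ℝ be an additive homomorphism (a real-collinear period character normalized so that its image lies in ℝ) whose restriction to the peripheral subgroup ℤ^{n−1} is nonzero, and assume that the image of χ is not a cyclic subgroup of ℝ (there is no c ∈ ℝ with image(χ) = ℤ·c). Then for every ε > 0 there exists a system of handle generators α₁, β₁, …, α_g, β_g in M such that 0 < χ(αᵢ) < ε and 0 < χ(βᵢ) < ε for every i = 1, …, g. -/
open scoped BigOperators

set_option linter.unusedSimpArgs false

/-- Abstract handle systems. -/
def AbsHandle {M : Type*} [AddCommGroup M] {g : ℕ} (B : M →ₗ[ℤ] M →ₗ[ℤ] ℤ)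
    (a b : Fin g → M) : Prop :=
  ∀ i j : Fin g, B (a i) (a j) = 0 ∧ B (b i) (b j) = 0 ∧ B (a i) (b j) = (if i = j then 1 else 0)

lemma approx_one {s c : ℝ} (h : Irrational (s / c)) (t ε : ℝ) (hε : 0 < ε) :
    ∃ k m : ℤ, 0 < t + k * s + m * c ∧ t + k * s + m * c < ε := by
  have hd := dense_addSubgroupClosure_pair_iff.2 h
  obtain ⟨x, hx, hx1, hx2⟩ := hd.exists_between (show -t < ε - t by linarith)
  obtain ⟨k, m, rfl⟩ := AddSubgroup.mem_closure_pair.1 hx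
  refine ⟨k, m, ?_, ?_⟩ <;> simp only [zsmul_eq_mul] at * <;> linarith

lemma approx_irr {s c : ℝ} (h : Irrational (s / c)) (t ε : ℝ) (hε : 0 < ε) :
    ∃ k m : ℤ, 0 < t + k * s + m * c ∧ t + k * s + m * c < ε ∧
      Irrational ((t + k * s + m * c) / c) := by
  have hc : c ≠ 0 := by
    rintro rfl
    simp at h
  have h2 : Irrational ((2 * s) / c) := by
    have := h.natCast_mul (m := 2) (by norm_num)
    rwa [← mul_div_assoc] at this
  obtain ⟨k, m, h1, h3⟩ := approx_one h2 t ε hε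
  obtain ⟨k', m', h1', h3'⟩ := approx_one h2 (t + s) ε hε
  by_cases hi : Irrational ((t + (2 * k : ℤ) * s + m * c) / c)
  · refine ⟨2 * k, m, ?_, ?_, hi⟩ <;> push_cast <;> linarith
  by_cases hi' : Irrational ((t + (2 * k' + 1 : ℤ) * s + m' * c) / c)
  · refine ⟨2 * k' + 1, m', ?_, ?_, hi'⟩ <;> push_cast <;> linarith
  exfalso
  simp only [Irrational, not_not] at hi hi'
  obtain ⟨q, hq⟩ := hi
  obtain ⟨q', hq'⟩ := hi'
  have hne : (2 * k' + 1 - 2 * k : ℤ) ≠ 0 := by omega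
  have h5 := h.intCast_mul hne
  apply h5
  refine ⟨q' - q - m' + m, ?_⟩
  push_cast
  rw [hq, hq']
  push_cast
  field_simp
  ring

lemma abs_main {M : Type*} [AddCommGroup M] {g : ℕ} (B : M →ₗ[ℤ] M →ₗ[ℤ] ℤ)
    (hskew : ∀ x y, B x y = - B y x) (w : M) (hw : ∀ x, B x w = 0)
    (χ : M →+ ℝ) (a b : Fin g → M) (hab : AbsHandle B a b) (i0 : Fin g)
    (hirr : Irrational (χ (a i0) / χ w)) (ε : ℝ) (hε : 0 < ε) :
    ∃ a' b' : Fin g → M, AbsHandle B a' b' ∧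
      ∀ i, (0 < χ (a' i) ∧ χ (a' i) < ε) ∧ (0 < χ (b' i) ∧ χ (b' i) < ε) := by
  have hw' : ∀ x, B w x = 0 := fun x => by rw [hskew, hw, neg_zero]
  have haa : ∀ i j, B (a i) (a j) = 0 := fun i j => (hab i j).1
  have hbb : ∀ i j, B (b i) (b j) = 0 := fun i j => (hab i j).2.1
  have hab' : ∀ i j, B (a i) (b j) = if i = j then 1 else 0 := fun i j => (hab i j).2.2
  have hba : ∀ i j, B (b i) (a j) = if i = j then -1 else 0 := fun i j => by
    rw [hskew, hab']
    by_cases h : i = j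
    · simp [h]
    · simp [h, Ne.symm h]
  choose k m hkm1 hkm2 using fun i => approx_one hirr (χ (a i)) ε hε
  choose l n hln1 hln2 using fun i => approx_one hirr (χ (b i)) ε hε
  let k' : Fin g → ℤ := fun i => if i = i0 then 0 else k i
  let l' : Fin g → ℤ := fun i => if i = i0 then 0 else l i
  let u : M := b i0 + ∑ j, (l' j • a j - k' j • b j)
  obtain ⟨r, q, hr1, hr2, hr3⟩ := approx_irr hirr (χ u) ε hε
  let v : M := u + r • a i0 + q • w
  have hv : χ v = χ u + r * χ (a i0) + q * χ w := by simp [v]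
  rw [← hv] at hr1 hr2 hr3
  obtain ⟨r', q', hs1, hs2⟩ := approx_one hr3 (χ (a i0)) ε hε
  let z : M := a i0 + r' • v + q' • w
  have hz : χ z = χ (a i0) + r' * χ v + q' * χ w := by simp [z]
  rw [← hz] at hs1 hs2
  let x : Fin g → M := fun i => a i + k i • a i0 + m i • w
  let y : Fin g → M := fun i => b i + l i • a i0 + n i • w
  have hk0 : k' i0 = 0 := by simp [k']
  have hl0 : l' i0 = 0 := by simp [l']
  have av : ∀ i, B (a i) v = (if i = i0 then 1 else 0) - k' i := by
    intro i
    simp [v, u, map_add, map_sum, map_sub, haa, hab', hw]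
    ring
  have bv : ∀ i, B (b i) v = - l' i - (if i = i0 then r else 0) := by
    intro i
    simp [v, u, map_add, map_sum, map_sub, hba, hbb, hw]
    split_ifs <;> ring
  have vv : B v v = 0 := by have := hskew v v; omega
  have xx : ∀ i j, B (x i) (x j) = 0 := fun i j => by simp [x, haa, hw, hw']
  have yy : ∀ i j, i ≠ i0 → j ≠ i0 → B (y i) (y j) = 0 := fun i j hi hj => by
    simp [y, haa, hbb, hab', hba, hw, hw', hi, hj, Ne.symm hi, Ne.symm hj]
  have xy : ∀ i j, i ≠ i0 → j ≠ i0 → B (x i) (y j) = if i = j then 1 else 0 :=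
    fun i j hi hj => by
    simp [x, y, haa, hbb, hab', hba, hw, hw', hi, hj, Ne.symm hi, Ne.symm hj]
  have xv : ∀ i, i ≠ i0 → B (x i) v = 0 := fun i hi => by
    simp [x, av, hw', hk0, hi, k']
  have yv : ∀ i, i ≠ i0 → B (y i) v = 0 := fun i hi => by
    simp [y, av, bv, hw', hk0, hi, l']
  have xz : ∀ i, i ≠ i0 → B (x i) z = 0 := fun i hi => by
    have : B (x i) (a i0) = 0 := by simp [x, haa, hw']
    simp [z, this, xv i hi, hw]
  have yz : ∀ i, i ≠ i0 → B (y i) z = 0 := fun i hi => by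
    have : B (y i) (a i0) = 0 := by simp [y, haa, hba, hw', hi]
    simp [z, this, yv i hi, hw]
  have zv : B z v = 1 := by simp [z, av, vv, hw', hk0]
  have zz : B z z = 0 := by have := hskew z z; omega
  refine ⟨fun i => if i = i0 then z else x i, fun i => if i = i0 then v else y i, ?_, ?_⟩
  · intro i j
    by_cases hi : i = i0 <;> by_cases hj : j = i0
    · subst hi; subst hj
      simp [zz, vv, zv]
    · have h1 := xz j hj
      have h2 := yz j hj
      have h3 := yv j hj
      rw [hskew] at h1 h2 h3
      have h4 : i ≠ j := fun h => hj (h ▸ hi)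
      simp only [hi, hj, if_true, if_false]
      refine ⟨by omega, by omega, ?_⟩
      rw [if_neg (fun h => hj h.symm)]
      omega
    · simp [hi, hj, xz i hi, yv i hi, xv i hi]
    · simp [hi, hj, xx, yy i j hi hj, xy i j hi hj]
  · intro i
    by_cases hi : i = i0
    · simp [hi, hs1, hs2, hr1, hr2]
    · have h1 := hkm1 i
      have h2 := hkm2 i
      have h3 := hln1 i
      have h4 := hln2 i
      simp [hi, x, y, h1, h2, h3, h4]

/-- bilinear version of the form -/
def bilForm (g n : ℕ) :
    HomologyPunctured g n →ₗ[ℤ] HomologyPunctured g n →ₗ[ℤ] ℤ :=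
  LinearMap.mk₂ ℤ (fun x y => symplecticForm g x.1 y.1)
    (by intro x y z; simp only [symplecticForm, ← Finset.sum_add_distrib]
        refine Finset.sum_congr rfl fun i _ => ?_
        simp; ring)
    (by intro x y z; simp only [symplecticForm, smul_eq_mul, Finset.mul_sum]
        refine Finset.sum_congr rfl fun i _ => ?_
        simp; ring)
    (by intro x y z; simp only [symplecticForm, ← Finset.sum_add_distrib]
        refine Finset.sum_congr rfl fun i _ => ?_
        simp; ring)
    (by intro x y z; simp only [symplecticForm, smul_eq_mul, Finset.mul_sum]
        refine Finset.sum_congr rfl fun i _ => ?_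
        simp; ring)

lemma bilForm_apply (g n : ℕ) (x y : HomologyPunctured g n) :
    bilForm g n x y = symplecticForm g x.1 y.1 := rfl

/-- standard a-classes -/
def stdE (g n : ℕ) (i : Fin g) : HomologyPunctured g n :=
  (Pi.single ⟨2 * i.1, by have := i.isLt; omega⟩ 1, 0)
/-- standard b-classes -/
def stdF (g n : ℕ) (i : Fin g) : HomologyPunctured g n :=
  (Pi.single ⟨2 * i.1 + 1, by have := i.isLt; omega⟩ 1, 0)

lemma std_handle (g n : ℕ) : AbsHandle (bilForm g n) (stdE g n) (stdF g n) := by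
  intro i j
  have h1 : ∀ a b : ℕ, 2 * a ≠ 2 * b + 1 := by intros; omega
  have h2 : ∀ a b : ℕ, 2 * a + 1 ≠ 2 * b := by intros; omega
  simp only [bilForm_apply, symplecticForm, stdE, stdF]
  refine ⟨?_, ?_, ?_⟩
  · simp [Pi.single_apply, h1, h2]
  · simp [Pi.single_apply, h1, h2]
  · simp [Pi.single_apply, h1, h2, Fin.val_inj]
    try (split_ifs <;> simp_all)

lemma rational_cyclic (g n : ℕ) (χ : HomologyPunctured g n →+ ℝ)
    (hcyc : ¬ ∃ c : ℝ, Set.range χ = Set.range (fun k : ℤ => (k : ℝ) * c))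
    (c : ℝ) (hc : c ≠ 0) (hP : ∀ v, ∃ k : ℤ, χ (0, v) = k * c) :
    ∃ i, Irrational (χ (stdE g n i) / c) ∨ Irrational (χ (stdF g n i) / c) := by
  by_contra! hcon
  have hd : ∀ j : Fin (2 * g), ∃ N : ℤ, N ≠ 0 ∧ ∃ k : ℤ, N * χ (Pi.single j 1, 0) = k * c := by
    intro j
    have hq : ¬ Irrational (χ (Pi.single j 1, 0) / c) := by
      obtain ⟨j, hj⟩ := j
      rcases Nat.even_or_odd' j with ⟨i, rfl | rfl⟩
      · exact (hcon ⟨i, by omega⟩).1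
      · exact (hcon ⟨i, by omega⟩).2
    simp only [Irrational, not_not] at hq
    obtain ⟨q, hq⟩ := hq
    refine ⟨q.den, by exact_mod_cast q.den_nz, q.num, ?_⟩
    rw [eq_div_iff hc] at hq
    rw [← hq, ← mul_assoc]
    congr 1
    have := Rat.den_mul_eq_num q
    exact_mod_cast this
  choose N hN k hk using hd
  have hN' : (∏ j, N j) ≠ 0 := Finset.prod_ne_zero_iff.2 fun j _ => hN j
  set T : ℤ := ∏ j, N j with hT
  have hTR : (T : ℝ) ≠ 0 := by exact_mod_cast hN'
  have hall : ∀ x : HomologyPunctured g n, ∃ r : ℤ, χ x = r * (c / T) := by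
    have key : ∀ x : HomologyPunctured g n,
        x ∈ (AddSubgroup.zmultiples (c / (T : ℝ))).comap χ := by
      have e : ∀ j, ((Pi.single j 1, 0) : HomologyPunctured g n) ∈
          (AddSubgroup.zmultiples (c / (T : ℝ))).comap χ := by
        intro j
        obtain ⟨d, hd⟩ := Finset.dvd_prod_of_mem N (Finset.mem_univ j)
        rw [AddSubgroup.mem_comap, AddSubgroup.mem_zmultiples_iff]
        refine ⟨d * k j, ?_⟩
        rw [← hT] at hd
        have hd' : (T : ℝ) = N j * d := by exact_mod_cast hd
        rw [zsmul_eq_mul]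
        push_cast
        field_simp
        rw [hd']
        linear_combination (-(d : ℝ)) * hk j
      intro x
      have hx : x = (∑ j, x.1 j • ((Pi.single j 1, 0) : HomologyPunctured g n)) + (0, x.2) := by
        ext j
        · simp [Prod.fst_sum, Finset.sum_apply, Pi.single_apply]
        · simp [Prod.snd_sum]
      rw [hx]
      refine AddSubgroup.add_mem _ (AddSubgroup.sum_mem _ fun j _ =>
        AddSubgroup.zsmul_mem _ (e j) _) ?_
      obtain ⟨r, hr⟩ := hP x.2
      rw [AddSubgroup.mem_comap, AddSubgroup.mem_zmultiples_iff]
      refine ⟨r * T, ?_⟩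
      rw [hr, zsmul_eq_mul]
      push_cast
      field_simp
    intro x
    obtain ⟨r, hr⟩ := AddSubgroup.mem_zmultiples_iff.1 (key x)
    exact ⟨r, by rw [← hr, zsmul_eq_mul]⟩
  rcases AddSubgroup.dense_or_cyclic χ.range with h | ⟨a, ha⟩
  · have hpos : 0 < |c / T| := abs_pos.2 (div_ne_zero hc hTR)
    obtain ⟨x, hx, h1, h2⟩ := h.exists_between hpos
    obtain ⟨y, rfl⟩ := hx
    obtain ⟨r, hr⟩ := hall y
    have h3 : |χ y| < |c / T| := by rwa [abs_of_pos h1]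
    rw [hr, abs_mul] at h3
    have h4 : |(r : ℝ)| < 1 := by nlinarith
    have h5 : r = 0 := by
      have : |r| < 1 := by exact_mod_cast h4
      exact Int.abs_lt_one_iff.1 this
    rw [hr, h5] at h1
    simp at h1
  · apply hcyc
    refine ⟨a, ?_⟩
    ext x
    have : x ∈ χ.range ↔ x ∈ AddSubgroup.closure {a} := by rw [ha]
    rw [AddSubgroup.mem_closure_singleton] at this
    simpa [zsmul_eq_mul] using this

/-- Let `χ : M → ℝ` be an additive homomorphism (a real-collinear period character normalized
so that its image lies in `ℝ`) whose restriction to the peripheral subgroup `ℤ^{n-1}` is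
nonzero, and assume its image is not a cyclic subgroup of `ℝ`. Then for every `ε > 0` there is
a system of handle generators with `0 < χ(αᵢ) < ε` and `0 < χ(βᵢ) < ε` for every `i`. -/
theorem handle_system_with_small_periods (g n : ℕ) (hg : 1 ≤ g) (hn : 2 ≤ n)
    (χ : HomologyPunctured g n →+ ℝ)
    (hends : ∃ v : Fin (n - 1) → ℤ, χ (0, v) ≠ 0)
    (hcyc : ¬ ∃ c : ℝ, Set.range χ = Set.range (fun k : ℤ => (k : ℝ) * c)) :
    ∀ ε : ℝ, 0 < ε →
      ∃ α β : Fin g → HomologyPunctured g n, IsHandleSystem g n α β ∧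
        ∀ i : Fin g, (0 < χ (α i) ∧ χ (α i) < ε) ∧ (0 < χ (β i) ∧ χ (β i) < ε) := by
  intro ε hε
  have hsk : ∀ x y, bilForm g n x y = - bilForm g n y x := by
    intro x y
    simp only [bilForm_apply, symplecticForm, ← Finset.sum_neg_distrib]
    refine Finset.sum_congr rfl fun i _ => ?_
    ring
  have hrad : ∀ (v : Fin (n - 1) → ℤ) (x : HomologyPunctured g n), bilForm g n x (0, v) = 0 := by
    intro v x
    simp [bilForm_apply, symplecticForm]
  have hrad' : ∀ (v : Fin (n - 1) → ℤ) (x : HomologyPunctured g n), bilForm g n (0, v) x = 0 := by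
    intro v x
    simp [bilForm_apply, symplecticForm]
  have hstd := std_handle g n
  rcases AddSubgroup.dense_or_cyclic (χ.comp (AddMonoidHom.inr (Fin (2 * g) → ℤ)
    (Fin (n - 1) → ℤ))).range with h | ⟨c, hc⟩
  · have hap : ∀ t : ℝ, ∃ v, 0 < t + χ (0, v) ∧ t + χ (0, v) < ε := by
      intro t
      obtain ⟨x, ⟨v, rfl⟩, hx1, hx2⟩ := h.exists_between (show -t < ε - t by linarith)
      refine ⟨v, ?_, ?_⟩ <;> simp at hx1 hx2 <;> linarith
    choose p hp1 hp2 using hap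
    refine ⟨fun i => stdE g n i + (0, p (χ (stdE g n i))),
      fun i => stdF g n i + (0, p (χ (stdF g n i))), ?_, ?_⟩
    · intro i j
      obtain ⟨h1, h2, h3⟩ := hstd i j
      simp only [← bilForm_apply, map_add, LinearMap.add_apply, hrad, hrad', h1, h2, h3, add_zero]
      simp
    · intro i
      simp only [map_add]
      exact ⟨⟨hp1 _, hp2 _⟩, ⟨hp1 _, hp2 _⟩⟩
  · have hP : ∀ v, ∃ k : ℤ, χ (0, v) = k * c := by
      intro v
      have : χ (0, v) ∈ AddSubgroup.closure {c} := by
        rw [← hc]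
        exact ⟨v, rfl⟩
      obtain ⟨k, hk⟩ := AddSubgroup.mem_closure_singleton.1 this
      exact ⟨k, by rw [← hk, zsmul_eq_mul]⟩
    have hcne : c ≠ 0 := by
      rintro rfl
      obtain ⟨v, hv⟩ := hends
      obtain ⟨k, hk⟩ := hP v
      simp [hk] at hv
    obtain ⟨w, hw⟩ : ∃ w, χ (0, w) = c := by
      have : c ∈ AddSubgroup.closure {c} := AddSubgroup.subset_closure rfl
      rw [← hc] at this
      exact this
    obtain ⟨i0, h | h⟩ := rational_cyclic g n χ hcyc c hcne hP
    · rw [← hw] at h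
      exact abs_main (bilForm g n) hsk (0, w) (hrad w) χ _ _ hstd i0 h ε hε
    · rw [← hw] at h
      refine abs_main (bilForm g n) hsk (0, w) (hrad w) χ (stdF g n) (fun i => - stdE g n i)
        ?_ i0 h ε hε
      intro i j
      refine ⟨(hstd i j).2.1, ?_, ?_⟩
      · simp [(hstd i j).1]
      · rw [map_neg, hsk, neg_neg, (hstd j i).2.2]
        simp [eq_comm]
end

section
/- Let n ≥ 2 and let w₁, …, w_n be nonzero real numbers with w₁ + ⋯ + w_n = 0. If there exist indices i, j such that the ratio wᵢ/wⱼ is irrational, then the family satisfies the reordering property: there exist a permutation σ of {1, …, n} and an integer h with 1 ≤ h ≤ n − 1 such that w_{σ(i)} > 0 for all 1 ≤ i ≤ h, w_{σ(i)} < 0 for all h + 1 ≤ i ≤ n, and for all integers s, t with 1 ≤ s ≤ h and h ≤ t ≤ n, the equality Σ_{i=1}^{s} w_{σ(i)} = − Σ_{j=t+1}^{n} w_{σ(j)} implies s = h and t = h. -/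
open scoped BigOperators

/-- If the values on `X` dominate the values on `Y` and the total sum is zero, the sum over `X`
is nonnegative, and vanishes only if all values vanish. -/
lemma dominating_sum {ι : Type*} (X Y : Finset ι) (g : ι → ℝ) (hY : Y.Nonempty)
    (hdom : ∀ x ∈ X, ∀ y ∈ Y, g y ≤ g x) (htot : ∑ x ∈ X, g x + ∑ y ∈ Y, g y = 0) :
    0 ≤ ∑ x ∈ X, g x ∧
      (X.Nonempty → ∑ x ∈ X, g x = 0 → (∀ x ∈ X, g x = 0) ∧ (∀ y ∈ Y, g y = 0)) := by
  obtain ⟨y0, hy0, hmax⟩ := Finset.exists_max_image Y g hY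
  rcases lt_or_ge (g y0) 0 with hneg | hpos
  · have h1 : ∑ y ∈ Y, g y < 0 :=
      Finset.sum_neg (fun y hy => lt_of_le_of_lt (hmax y hy) hneg) hY
    refine ⟨by linarith, fun _ h => by linarith⟩
  · have hX : ∀ x ∈ X, 0 ≤ g x := fun x hx => hpos.trans (hdom x hx y0 hy0)
    refine ⟨Finset.sum_nonneg hX, fun hne h => ?_⟩
    have hX0 := (Finset.sum_eq_zero_iff_of_nonneg hX).1 h
    obtain ⟨x0, hx0⟩ := hne
    have hYn : ∀ y ∈ Y, g y ≤ 0 := fun y hy => (hdom x0 hx0 y hy).trans (hX0 x0 hx0).le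
    have hY0 : ∑ y ∈ Y, g y = 0 := by linarith
    exact ⟨hX0, (Finset.sum_eq_zero_iff_of_nonpos hYn).1 hY0⟩

/-- A rational-linear functional separating two incommensurable reals. -/
lemma exists_functional (a b : ℝ) (hb : b ≠ 0) (h : Irrational (a / b)) :
    ∃ f : ℝ →ₗ[ℚ] ℚ, f b = 0 ∧ f a ≠ 0 := by
  have hmem : a ∉ Submodule.span ℚ {b} := by
    rw [Submodule.mem_span_singleton]
    rintro ⟨q, hq⟩
    apply h
    refine ⟨q, ?_⟩
    rw [← hq, Rat.smul_def]
    field_simp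
  obtain ⟨f, hfa, hf⟩ := Submodule.exists_dual_map_eq_bot_of_notMem hmem inferInstance
  refine ⟨f, ?_, hfa⟩
  have : f b ∈ (Submodule.span ℚ {b}).map f :=
    Submodule.mem_map_of_mem (Submodule.mem_span_singleton_self b)
  rw [hf] at this
  simpa using this

/-- If `w₁, …, w_n` are nonzero reals with zero sum (`n ≥ 2`) and some ratio `wᵢ/wⱼ` is
irrational, then the family satisfies the reordering property: there are a permutation `σ`
and `1 ≤ h ≤ n - 1` such that the first `h` reordered numbers are positive, the remaining
ones are negative, and the partial-sum coincidence
`Σ_{i=1}^{s} w_{σ(i)} = − Σ_{j=t+1}^{n} w_{σ(j)}` (for `1 ≤ s ≤ h ≤ t ≤ n`) holds only for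
`s = t = h`. (Indices of `Fin n` are `0`-based: the first `s` entries are those with
index `< s`, and the entries from `t+1` to `n` are those with index `≥ t`.) -/
theorem reordering_property_of_irrational_ratio (n : ℕ) (hn : 2 ≤ n) (w : Fin n → ℝ)
    (hw : ∀ i, w i ≠ 0) (hsum : ∑ i, w i = 0)
    (hirr : ∃ i j, Irrational (w i / w j)) :
    ∃ (σ : Equiv.Perm (Fin n)) (h : ℕ), 1 ≤ h ∧ h ≤ n - 1 ∧
      (∀ i : Fin n, (i : ℕ) < h → 0 < w (σ i)) ∧
      (∀ i : Fin n, h ≤ (i : ℕ) → w (σ i) < 0) ∧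
      ∀ s t : ℕ, 1 ≤ s → s ≤ h → h ≤ t → t ≤ n →
        (∑ i ∈ Finset.univ.filter (fun i : Fin n => (i : ℕ) < s), w (σ i)) =
          -(∑ i ∈ Finset.univ.filter (fun i : Fin n => t ≤ (i : ℕ)), w (σ i)) →
        s = h ∧ t = h := by
  classical
  obtain ⟨i0, j0, hij⟩ := hirr
  obtain ⟨f, hfb, hfa⟩ := exists_functional (w i0) (w j0) (hw j0) hij
  set S : ℝ := ∑ i ∈ Finset.univ.filter (fun i => 0 < w i), w i with hS
  set c : ℝ := (f S : ℝ) / S with hc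
  set p : ℝ →+ ℝ :=
    { toFun := fun x => (f x : ℝ) - c * x
      map_zero' := by simp
      map_add' := by intro x y; simp only [map_add]; push_cast; ring } with hp
  have hpv : ∀ x, p x = (f x : ℝ) - c * x := fun x => rfl
  -- some positive and some negative entry
  have i00 : Fin n := i0
  have hexpos : ∃ i, 0 < w i := by
    by_contra! hcon
    have := Finset.sum_neg (s := Finset.univ) (f := w)
      (fun i _ => lt_of_le_of_ne (hcon i) (hw i)) ⟨i00, Finset.mem_univ _⟩
    linarith
  have hexneg : ∃ i, w i < 0 := by
    by_contra! hcon
    have := Finset.sum_pos (s := Finset.univ) (f := w)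
      (fun i _ => lt_of_le_of_ne (hcon i) (hw i).symm) ⟨i00, Finset.mem_univ _⟩
    linarith
  have hSpos : 0 < S := by
    obtain ⟨i, hi⟩ := hexpos
    exact Finset.sum_pos (fun i hi => (Finset.mem_filter.1 hi).2)
      ⟨i, Finset.mem_filter.2 ⟨Finset.mem_univ _, hi⟩⟩
  have hpS : p S = 0 := by
    rw [hpv, hc]; field_simp; ring
  -- the sorting key
  let key : Fin n → ℕ ×ₗ ℝ := fun i =>
    if 0 < w i then toLex (0, - p (w i)) else toLex (1, p (w i))
  let σ : Equiv.Perm (Fin n) := Tuple.sort key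
  have hmono : Monotone (key ∘ σ) := Tuple.monotone_sort key
  have hsign : ∀ i j, i ≤ j → w (σ i) < 0 → w (σ j) < 0 := by
    intro i j hle hi
    have h1 := hmono hle
    by_contra hj
    have hj' : 0 < w (σ j) := lt_of_le_of_ne (not_lt.1 hj) (hw _).symm
    simp only [Function.comp, key, hj', not_lt.2 hi.le, if_true, if_false,
      Prod.Lex.toLex_le_toLex] at h1
    norm_num at h1
  have hordpos : ∀ i j, i ≤ j → 0 < w (σ i) → 0 < w (σ j) → p (w (σ j)) ≤ p (w (σ i)) := by
    intro i j hle hi hj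
    have h1 := hmono hle
    simp only [Function.comp, key, hi, hj, if_true, Prod.Lex.toLex_le_toLex] at h1
    norm_num at h1
    exact h1
  have hordneg : ∀ i j, i ≤ j → w (σ i) < 0 → w (σ j) < 0 → p (w (σ i)) ≤ p (w (σ j)) := by
    intro i j hle hi hj
    have h1 := hmono hle
    simp only [Function.comp, key, not_lt.2 hi.le, not_lt.2 hj.le, if_false,
      Prod.Lex.toLex_le_toLex] at h1
    norm_num at h1
    exact h1
  -- the number of positive entries
  have hex : ∃ h : ℕ, ∀ i : Fin n, h ≤ (i : ℕ) → w (σ i) < 0 :=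
    ⟨n, fun i hi => absurd i.2 (not_lt.2 hi)⟩
  obtain ⟨h, hneg, hmin⟩ : ∃ h : ℕ, (∀ i : Fin n, h ≤ (i : ℕ) → w (σ i) < 0) ∧
      ∀ m < h, ¬ ∀ i : Fin n, m ≤ (i : ℕ) → w (σ i) < 0 :=
    ⟨Nat.find hex, Nat.find_spec hex, fun m hm => Nat.find_min hex hm⟩
  have hpos : ∀ i : Fin n, (i : ℕ) < h → 0 < w (σ i) := by
    intro i hi
    by_contra hcon
    exact hmin i hi fun j hj => hsign i j hj (lt_of_le_of_ne (not_lt.1 hcon) (hw _))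
  have h1 : 1 ≤ h := by
    obtain ⟨i, hi⟩ := hexpos
    by_contra hcon
    have := hneg (σ.symm i) (by omega)
    rw [Equiv.apply_symm_apply] at this
    linarith
  have hn1 : h ≤ n - 1 := by
    obtain ⟨i, hi⟩ := hexneg
    by_contra hcon
    have := hpos (σ.symm i) (by have := (σ.symm i).2; omega)
    rw [Equiv.apply_symm_apply] at this
    linarith
  refine ⟨σ, h, h1, hn1, hpos, hneg, ?_⟩
  intro s t hs1 hsh hht htn heq
  -- the four blocks
  set X1 := Finset.univ.filter (fun i : Fin n => (i : ℕ) < s) with hX1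
  set X2 := Finset.univ.filter (fun i : Fin n => t ≤ (i : ℕ)) with hX2
  set Y1 := Finset.univ.filter (fun i : Fin n => s ≤ (i : ℕ) ∧ (i : ℕ) < h) with hY1
  set Y2 := Finset.univ.filter (fun i : Fin n => h ≤ (i : ℕ) ∧ (i : ℕ) < t) with hY2
  have hsumP : ∑ i ∈ X1, w (σ i) + ∑ i ∈ Y1, w (σ i) = S := by
    rw [← Finset.sum_union]
    · rw [hS]
      refine Finset.sum_equiv σ ?_ (fun i _ => rfl)
      intro i
      simp only [hX1, hY1, Finset.mem_union, Finset.mem_filter, Finset.mem_univ, true_and]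
      constructor
      · intro hi; exact hpos i (by omega)
      · intro hi
        by_contra hcon
        have := hneg i (by omega)
        linarith
    · rw [Finset.disjoint_left]
      intro i; simp only [hX1, hY1, Finset.mem_filter, Finset.mem_univ, true_and]; omega
  have hsumN : ∑ i ∈ X2, w (σ i) + ∑ i ∈ Y2, w (σ i) = -S := by
    have htot : ∑ i, w (σ i) = 0 := by rw [Equiv.sum_comp σ w]; exact hsum
    have hdec : ∑ i, w (σ i) = (∑ i ∈ X1, w (σ i) + ∑ i ∈ Y1, w (σ i)) +
        (∑ i ∈ X2, w (σ i) + ∑ i ∈ Y2, w (σ i)) := by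
      simp only [hX1, hX2, hY1, hY2, Finset.sum_filter, ← Finset.sum_add_distrib]
      refine Finset.sum_congr rfl fun i _ => ?_
      split_ifs <;> first | omega | simp
    linarith
  have hX1ne : X1.Nonempty := ⟨⟨0, by omega⟩, by simp [hX1]; omega⟩
  have hX1pos : 0 < ∑ i ∈ X1, w (σ i) :=
    Finset.sum_pos (fun i hi => hpos i (by simp [hX1] at hi; omega)) hX1ne
  have hY1z : s < h → Y1.Nonempty := fun hlt => ⟨⟨s, by omega⟩, by simp [hY1]; omega⟩
  have hY2z : h < t → Y2.Nonempty := fun hlt => ⟨⟨h, by omega⟩, by simp [hY2]; omega⟩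
  have hY1pos : s < h → 0 < ∑ i ∈ Y1, w (σ i) := fun hlt =>
    Finset.sum_pos (fun i hi => hpos i (by simp [hY1] at hi; omega)) (hY1z hlt)
  have hY2neg : h < t → ∑ i ∈ Y2, w (σ i) < 0 := fun hlt =>
    Finset.sum_neg (fun i hi => hneg i (by simp [hY2] at hi; omega)) (hY2z hlt)
  have hbal : ∑ i ∈ Y1, w (σ i) = - ∑ i ∈ Y2, w (σ i) := by linarith
  by_cases hsh' : s = h
  · refine ⟨hsh', ?_⟩
    by_contra hne
    have h2 := hY2neg (by omega)
    have h3 : Y1 = ∅ := by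
      ext i; simp [hY1]; omega
    rw [h3] at hbal
    simp at hbal
    linarith
  exfalso
  have hlt : s < h := by omega
  have hht' : h < t := by
    by_contra hcon
    have h3 : Y2 = ∅ := by
      ext i; simp [hY2]; omega
    have h2 := hY1pos hlt
    rw [h3] at hbal
    simp at hbal
    linarith
  have htn' : t < n := by
    by_contra hcon
    have h3 : X2 = ∅ := by
      ext i; simp [hX2]; omega
    rw [h3] at heq
    simp at heq
    linarith
  have hX2ne : X2.Nonempty := ⟨⟨t, htn'⟩, by simp [hX2]⟩
  have hA := dominating_sum X1 Y1 (fun i => p (w (σ i))) (hY1z hlt)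
    (fun x hx y hy => by
      simp only [hX1, hY1, Finset.mem_filter, Finset.mem_univ, true_and] at hx hy
      exact hordpos x y (Fin.le_def.2 (by omega)) (hpos x (by omega)) (hpos y (by omega)))
    (by rw [← map_sum, ← map_sum, ← map_add, hsumP, hpS])
  have hB := dominating_sum X2 Y2 (fun i => p (w (σ i))) (hY2z hht')
    (fun x hx y hy => by
      simp only [hX2, hY2, Finset.mem_filter, Finset.mem_univ, true_and] at hx hy
      exact hordneg y x (Fin.le_def.2 (by omega)) (hneg y (by omega)) (hneg x (by omega)))
    (by rw [← map_sum, ← map_sum, ← map_add, hsumN, map_neg, hpS, neg_zero])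
  have hAB : ∑ i ∈ X1, p (w (σ i)) = - ∑ i ∈ X2, p (w (σ i)) := by
    rw [← map_sum, ← map_sum, heq, map_neg]
  obtain ⟨hA1, hA2⟩ := hA
  obtain ⟨hB1, hB2⟩ := hB
  obtain ⟨a1, a2⟩ := hA2 hX1ne (by linarith)
  obtain ⟨b1, b2⟩ := hB2 hX2ne (by linarith)
  have hall : ∀ i, p (w i) = 0 := by
    intro i
    obtain ⟨k, rfl⟩ := σ.surjective i
    by_cases k1 : (k : ℕ) < s
    · exact a1 k (by simp [hX1, k1])
    by_cases k2 : (k : ℕ) < h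
    · exact a2 k (by simp [hY1]; omega)
    by_cases k3 : (k : ℕ) < t
    · exact b2 k (by simp [hY2]; omega)
    · exact b1 k (by simp [hX2]; omega)
  have e1 := hall j0
  rw [hpv, hfb] at e1
  have hc0 : c = 0 := by
    have : c * w j0 = 0 := by simpa using e1
    exact (mul_eq_zero.1 this).resolve_right (hw j0)
  have e2 := hall i0
  rw [hpv, hc0] at e2
  apply hfa
  simpa using e2
end

section
/- Let g ≥ 1 and let χ : ℤ^{2g} → ℂ be an additive group homomorphism. If α₁, β₁, …, α_g, β_g and α₁′, β₁′, …, α_g′, β_g′ are two symplectic bases of ℤ^{2g}, then Σᵢ₌₁^g Im(conj(χ(αᵢ)) · χ(βᵢ)) = Σᵢ₌₁^g Im(conj(χ(αᵢ′)) · χ(βᵢ′)); in other words the volume vol(χ) = Σᵢ Im(conj(χ(αᵢ)) · χ(βᵢ)) does not depend on the choice of symplectic basis. -/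
open scoped BigOperators

def omegaB (g : ℕ) : (Fin (2 * g) → ℤ) →ₗ[ℤ] (Fin (2 * g) → ℤ) →ₗ[ℤ] ℤ :=
  LinearMap.mk₂ ℤ (symplecticForm g)
    (by intro x y z
        simp only [symplecticForm, ← Finset.sum_add_distrib, Pi.add_apply]
        exact Finset.sum_congr rfl fun _ _ => by ring)
    (by intro c x y
        simp only [symplecticForm, smul_eq_mul, Finset.mul_sum, Pi.smul_apply]
        exact Finset.sum_congr rfl fun _ _ => by ring)
    (by intro x y z
        simp only [symplecticForm, ← Finset.sum_add_distrib, Pi.add_apply]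
        exact Finset.sum_congr rfl fun _ _ => by ring)
    (by intro c x y
        simp only [symplecticForm, smul_eq_mul, Finset.mul_sum, Pi.smul_apply]
        exact Finset.sum_congr rfl fun _ _ => by ring)

theorem omegaB_apply (g : ℕ) (x y) : omegaB g x y = symplecticForm g x y := rfl

theorem omegaB_swap (g : ℕ) (x y) : omegaB g x y = - omegaB g y x := by
  simp only [omegaB_apply, symplecticForm, ← Finset.sum_neg_distrib]
  exact Finset.sum_congr rfl fun _ _ => by ring

theorem expand_symplectic (g : ℕ) (α β : Fin g → (Fin (2 * g) → ℤ))
    (h : IsSymplecticBasis g α β) (x : Fin (2 * g) → ℤ) :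
    x = ∑ i, (omegaB g x (β i) • α i - omegaB g x (α i) • β i) := by
  have haa : ∀ i j, omegaB g (α i) (α j) = 0 := fun i j => (h i j).1
  have hbb : ∀ i j, omegaB g (β i) (β j) = 0 := fun i j => (h i j).2.1
  have hab : ∀ i j, omegaB g (α i) (β j) = if i = j then 1 else 0 := fun i j => (h i j).2.2
  have hba : ∀ i j, omegaB g (β i) (α j) = if i = j then -1 else 0 := fun i j => by
    rw [omegaB_swap, hab]
    by_cases hij : i = j
    · simp [hij]
    · simp [hij, Ne.symm hij]
  let φ : (Fin (2 * g) → ℤ) →ₗ[ℤ] (Fin g ⊕ Fin g → ℤ) :=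
    LinearMap.pi (Sum.elim (fun i => (omegaB g).flip (β i)) (fun i => (omegaB g).flip (α i)))
  have hφ : ∀ c d : Fin g → ℤ,
      φ (∑ i, (c i • α i - d i • β i)) = Sum.elim c d := by
    intro c d
    funext k
    rcases k with k | k
    · simp [φ, LinearMap.sum_apply, -zsmul_eq_mul, hab, hbb]
    · simp [φ, LinearMap.sum_apply, -zsmul_eq_mul, haa, hba]
  have hsurj : Function.Surjective φ := fun v =>
    ⟨_, (hφ (fun i => v (Sum.inl i)) (fun i => v (Sum.inr i))).trans
      (by funext k; rcases k with k | k <;> rfl)⟩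
  let e : Fin g ⊕ Fin g ≃ Fin (2 * g) := finSumFinEquiv.trans (finCongr (by omega))
  have hinj : Function.Injective φ :=
    OrzechProperty.injective_of_surjective_of_injective
      (LinearEquiv.funCongrLeft ℤ ℤ e).toLinearMap φ
      (LinearEquiv.funCongrLeft ℤ ℤ e).injective hsurj
  apply hinj
  rw [hφ]
  funext k
  rcases k with k | k <;> rfl

/-- The alternating biadditive form `Im(conj(χ x) χ y)`. -/
noncomputable def imForm (g : ℕ) (χ : (Fin (2 * g) → ℤ) →+ ℂ) :
    (Fin (2 * g) → ℤ) →ₗ[ℤ] (Fin (2 * g) → ℤ) →ₗ[ℤ] ℝ :=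
  LinearMap.mk₂ ℤ (fun x y => ((starRingEnd ℂ) (χ x) * χ y).im)
    (by intro x y z; simp; ring)
    (by intro c x y; rw [map_zsmul]; simp; ring)
    (by intro x y z; simp; ring)
    (by intro c x y; rw [map_zsmul]; simp; ring)

theorem imForm_swap (g : ℕ) (χ) (x y) : imForm g χ x y = - imForm g χ y x := by
  simp [imForm]; ring

/-- The volume `vol(χ) = Σᵢ Im(conj(χ(αᵢ)) · χ(βᵢ))` of a period character
`χ : ℤ^{2g} → ℂ` does not depend on the choice of symplectic basis. -/
theorem volume_independent_of_symplectic_basis (g : ℕ) (hg : 1 ≤ g)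
    (χ : (Fin (2 * g) → ℤ) →+ ℂ)
    (α β α' β' : Fin g → (Fin (2 * g) → ℤ))
    (hαβ : IsSymplecticBasis g α β) (hαβ' : IsSymplecticBasis g α' β') :
    ∑ i : Fin g, ((starRingEnd ℂ) (χ (α i)) * χ (β i)).im =
      ∑ i : Fin g, ((starRingEnd ℂ) (χ (α' i)) * χ (β' i)).im := by
  have key : ∑ j, (imForm g χ (α' j) (β' j) - imForm g χ (β' j) (α' j)) =
      ∑ i, (imForm g χ (α i) (β i) - imForm g χ (β i) (α i)) := by
    have h1 : ∀ x y, imForm g χ x y = ∑ i, ((omegaB g y (β i) : ℝ) * imForm g χ x (α i)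
        - (omegaB g y (α i) : ℝ) * imForm g χ x (β i)) := by
      intro x y
      conv_lhs => rw [expand_symplectic g α β hαβ y]
      simp only [map_sum, map_sub, map_zsmul, LinearMap.sum_apply, LinearMap.sub_apply, LinearMap.smul_apply]
      simp only [zsmul_eq_mul]
    have h2 : ∀ x y, imForm g χ x y = ∑ j, ((omegaB g x (β' j) : ℝ) * imForm g χ (α' j) y
        - (omegaB g x (α' j) : ℝ) * imForm g χ (β' j) y) := by
      intro x y
      conv_lhs => rw [expand_symplectic g α' β' hαβ' x]
      simp only [map_sum, map_sub, map_zsmul, LinearMap.sum_apply, LinearMap.sub_apply, LinearMap.smul_apply]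
      simp only [zsmul_eq_mul]
    have e1 : ∀ j, imForm g χ (α' j) (β' j) - imForm g χ (β' j) (α' j) = _ := fun j => by
      rw [h1 (α' j) (β' j), h1 (β' j) (α' j), ← Finset.sum_sub_distrib]
    have e2 : ∀ i, imForm g χ (α i) (β i) - imForm g χ (β i) (α i) = _ := fun i => by
      rw [h2 (α i) (β i), h2 (β i) (α i), ← Finset.sum_sub_distrib]
    rw [Finset.sum_congr rfl fun j _ => e1 j, Finset.sum_congr rfl fun i _ => e2 i,
      Finset.sum_comm]
    refine Finset.sum_congr rfl fun i _ => Finset.sum_congr rfl fun j _ => ?_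
    rw [omegaB_swap g (α i), omegaB_swap g (α i), omegaB_swap g (β i), omegaB_swap g (β i)]
    push_cast
    ring
  have h3 : ∀ a b : Fin g → (Fin (2 * g) → ℤ),
      ∑ j, (imForm g χ (a j) (b j) - imForm g χ (b j) (a j)) =
        2 * ∑ i : Fin g, ((starRingEnd ℂ) (χ (a i)) * χ (b i)).im := by
    intro a b
    rw [Finset.mul_sum]
    refine Finset.sum_congr rfl fun j _ => ?_
    rw [imForm_swap g χ (b j)]
    change _ = 2 * imForm g χ (a j) (b j)
    ring
  rw [h3, h3] at key
  linarith
end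

section
/- For all positive real numbers x, y such that x/y is irrational, and for every ε > 0, there exists a matrix (a b; c d) in SL₂(ℤ) (integer entries, determinant 1) such that 0 < a·x + b·y < ε and 0 < c·x + d·y < ε. -/
/-- For positive reals `x, y` with `x/y` irrational and any `ε > 0`, there is a matrix
`(a b; c d)` in `SL₂(ℤ)` such that `0 < a·x + b·y < ε` and `0 < c·x + d·y < ε`. -/
theorem sl2_shrinks_irrational_pair (x y : ℝ) (hx : 0 < x) (hy : 0 < y)
    (hirr : Irrational (x / y)) (ε : ℝ) (hε : 0 < ε) :
    ∃ a b c d : ℤ, a * d - b * c = 1 ∧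
      0 < (a : ℝ) * x + (b : ℝ) * y ∧ (a : ℝ) * x + (b : ℝ) * y < ε ∧
      0 < (c : ℝ) * x + (d : ℝ) * y ∧ (c : ℝ) * x + (d : ℝ) * y < ε := by
  have hdense := dense_addSubgroupClosure_pair_iff.mpr hirr
  obtain ⟨z, hz, hz0, hzε⟩ : ∃ z ∈ (AddSubgroup.closure {x, y} : AddSubgroup ℝ), 0 < z ∧ z < ε := by
    obtain ⟨z, hz, h1, h2⟩ := hdense.exists_between hε
    exact ⟨z, hz, h1, h2⟩
  rw [AddSubgroup.mem_closure_pair] at hz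
  obtain ⟨m, n, rfl⟩ := hz
  simp only [zsmul_eq_mul] at hz0 hzε
  have hg : 0 < Int.gcd m n := by
    rw [Int.gcd_pos_iff]
    by_contra! h
    simp [h.1, h.2] at hz0
  obtain ⟨a, b, hab, hm, hn⟩ := Int.exists_gcd_one hg
  set g := Int.gcd m n
  have hg1 : (1 : ℝ) ≤ g := by exact_mod_cast hg
  have hfac : (m : ℝ) * x + n * y = (a * x + b * y) * g := by
    rw [hm, hn]; push_cast; ring
  rw [hfac] at hz0 hzε
  have hu : 0 < (a : ℝ) * x + b * y := pos_of_mul_pos_left hz0 (by linarith)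
  have huε : (a : ℝ) * x + b * y < ε := by nlinarith
  obtain ⟨s, t, hst⟩ := Int.isCoprime_iff_gcd_eq_one.mpr hab
  obtain ⟨k, ⟨hk1, hk2⟩, -⟩ := existsUnique_add_zsmul_mem_Ioc hu ((-t : ℝ) * x + s * y) 0
  simp only [zsmul_eq_mul, zero_add] at hk1 hk2
  refine ⟨a, b, -t + k * a, s + k * b, by linear_combination hst, hu, huε, ?_, ?_⟩ <;>
    push_cast <;> linarith
end
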